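/- Let H=(V_H,E_H) be a fixed graph with at least two edges, let P be a strict partial order on E_H, let ψ be a label multiplicity distribution, and set ρ_H = min over subgraphs I=(V_I,E_I) of H with at least two edges of |V_I|/(|E_I|−1). If δ:ℕ→(0,1) satisfies δ(n)·n^{ρ_H} → ∞ as n→∞, then the probability that a random temporal graph drawn from Γ_{[n]}(ψ) contains (H,P) as a δ(n)-temporal motif tends to 1 as n→∞. -/

import Mathlib

open MeasureTheory ProbabilityTheory Filter Set
open scoped ENNReal NNReal Topology

noncomputable section

namespace RTG

/-- A temporal graph on vertex type `V`, given by the finite set of real time labels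
attached to each potential edge (unordered pair of vertices). -/
abbrev TGraph (V : Type*) := Sym2 V → Finset ℝ

/-- `P` is a strict partial order supported on the set `s`. -/
def StrictPartialOrderOn {α : Type*} (s : Set α) (P : α → α → Prop) : Prop :=
  (∀ a, ¬ P a a) ∧ (∀ a b c, P a b → P b c → P a c) ∧ ∀ a b, P a b → a ∈ s ∧ b ∈ s

/-- The temporal graph `Λ` contains `(H, P)` as a `δ`-temporal motif. -/
def Contains {VH V : Type*} (H : SimpleGraph VH) (P : Sym2 VH → Sym2 VH → Prop)
    (Λ : TGraph V) (δ : ℝ) : Prop :=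
  ∃ Φ : VH → V, Function.Injective Φ ∧
    ∃ lab : Sym2 VH → ℝ,
      (∀ e ∈ H.edgeSet, lab e ∈ Λ (Sym2.map Φ e)) ∧
      (∀ e f, P e f → lab e < lab f) ∧
      (∀ e ∈ H.edgeSet, ∀ f ∈ H.edgeSet, lab e - lab f < δ)

/-- The sparsity `ρ_H` of a graph `H`: the minimum over subgraphs with at least two
edges of `|V_I| / (|E_I| - 1)`. -/
def sparsity {VH : Type*} (H : SimpleGraph VH) : ℝ :=
  sInf {x : ℝ | ∃ I : H.Subgraph, 2 ≤ I.edgeSet.ncard ∧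
    x = (I.verts.ncard : ℝ) / ((I.edgeSet.ncard : ℝ) - 1)}

/-- The space of label data on a single edge: a number `k` of labels together with the
tuple of `k` label values (indexed in order of sampling). -/
abbrev LabelSpace := Σ k : ℕ, Fin k → ℝ

/-- The uniform distribution on `(0, 1]`. -/
def unif01 : Measure ℝ := volume.restrict (Set.Ioc 0 1)

/-- The uniform distribution on `{1, …, T}` (as a measure on `ℝ`). -/
def unifDisc (T : ℕ) : Measure ℝ :=
  (T : ℝ≥0∞)⁻¹ • ∑ k ∈ Finset.Icc 1 T, Measure.dirac (k : ℝ)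

/-- The distribution of the label data of a single edge: the number of labels is drawn
according to `ψ` and, independently, each label value is drawn according to `ν`. -/
def edgeMeasure (ν : Measure ℝ) (ψ : Measure ℕ) : Measure LabelSpace :=
  Measure.sum fun k => ψ {k} • (Measure.pi fun _ : Fin k => ν).map (Sigma.mk k)

/-- The doubly random temporal graph model on vertex set `V` with label value
distribution `ν` and label multiplicity distribution `ψ`: all edges receive independent
identically distributed label data. -/
def model (V : Type*) [Fintype V] [DecidableEq V] (ν : Measure ℝ) (ψ : Measure ℕ) :
    Measure (Sym2 V → LabelSpace) :=
  Measure.pi fun _ : Sym2 V => edgeMeasure ν ψ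

/-- The continuous doubly random temporal graph `Γ_V(ψ)`. -/
abbrev contModel (V : Type*) [Fintype V] [DecidableEq V] (ψ : Measure ℕ) :
    Measure (Sym2 V → LabelSpace) := model V unif01 ψ

/-- The discrete doubly random temporal graph `Γ_V(ψ, T)`. -/
abbrev discModel (V : Type*) [Fintype V] [DecidableEq V] (ψ : Measure ℕ) (T : ℕ) :
    Measure (Sym2 V → LabelSpace) := model V (unifDisc T) ψ

/-- The temporal graph determined by a sample `ω` of the model: each non-loop edge
carries the sampled set of labels. -/
def toTGraph {V : Type*} [DecidableEq V] (ω : Sym2 V → LabelSpace) : TGraph V :=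
  fun e => if e.IsDiag then ∅ else Finset.image (ω e).2 Finset.univ

/-- The `T`-discretization of a temporal graph: each label `l` is replaced by `⌈T·l⌉`. -/
def discretize {V : Type*} (T : ℕ) (Λ : TGraph V) : TGraph V :=
  fun e => (Λ e).image fun l => ((⌈(T : ℝ) * l⌉ : ℤ) : ℝ)

/-- `ψ` is a label multiplicity distribution: a probability distribution on `ℕ` with
positive finite mean and finite second moment. -/
def IsLMD (ψ : Measure ℕ) : Prop :=
  IsProbabilityMeasure ψ ∧ Integrable (fun k : ℕ => (k : ℝ)) ψ ∧
    Integrable (fun k : ℕ => (k : ℝ) ^ 2) ψ ∧ 0 < ∫ k, (k : ℝ) ∂ψ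

/-- The mean `r` of a label multiplicity distribution. -/
def lmdMean (ψ : Measure ℕ) : ℝ := ∫ k, (k : ℝ) ∂ψ

/-- The second moment `r₂` of a label multiplicity distribution. -/
def lmdSq (ψ : Measure ℕ) : ℝ := ∫ k, (k : ℝ) ^ 2 ∂ψ

/-- `q = P[Q > 0]` for a label multiplicity distribution. -/
def lmdPos (ψ : Measure ℕ) : ℝ := (ψ {k | 0 < k}).toReal

/-- `v` is reachable from the set `S` by time `t` in the temporal graph `Λ`. -/
def ReachBy {V : Type*} (Λ : TGraph V) (S : Set V) (t : ℝ) (v : V) : Prop :=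
  v ∈ S ∨ ∃ (k : ℕ) (f : ℕ → V) (ts : ℕ → ℝ), 0 < k ∧ f 0 ∈ S ∧ f k = v ∧
    (∀ i < k, ts i ∈ Λ s(f i, f (i + 1))) ∧
    (∀ i j, i < j → j < k → ts i < ts j) ∧ ts (k - 1) ≤ t

/-- The reachability ball `B_Λ(S, t)`. -/
def ball {V : Type*} (Λ : TGraph V) (S : Set V) (t : ℝ) : Set V := {v | ReachBy Λ S t v}

/-- The doubling time of the set `S` in `Λ` (with value `∞` if the reachability ball
never doubles in size). -/
def doubleTime {V : Type*} (Λ : TGraph V) (S : Set V) : ℝ≥0∞ :=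
  ⨅ (t : ℝ) (_ : 0 ≤ t ∧ 2 * S.ncard ≤ (ball Λ S t).ncard), ENNReal.ofReal t

/-- The doubling time of the temporal graph `Λ`: the maximum doubling time over all
nonempty vertex sets of size at most half the number of vertices. -/
def doubleAll {V : Type*} [Fintype V] (Λ : TGraph V) : ℝ≥0∞ :=
  ⨆ (S : Set V) (_ : S.Nonempty ∧ 2 * S.ncard ≤ Fintype.card V), doubleTime Λ S

/-- `Double⁻`: the maximum doubling time over nonempty sets of size at most `n/4`. -/
def doubleSmall {V : Type*} [Fintype V] (Λ : TGraph V) : ℝ≥0∞ :=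
  ⨆ (S : Set V) (_ : S.Nonempty ∧ 4 * S.ncard ≤ Fintype.card V), doubleTime Λ S

/-- `Double⁺`: the maximum doubling time over sets of size in `(n/4, n/2]`. -/
def doubleLarge {V : Type*} [Fintype V] (Λ : TGraph V) : ℝ≥0∞ :=
  ⨆ (S : Set V) (_ : Fintype.card V < 4 * S.ncard ∧ 2 * S.ncard ≤ Fintype.card V),
    doubleTime Λ S

/-- The partial reversal `ℛ(Λ, t)`: every label `l < t` is replaced by `t - l`. -/
def reverse {V : Type*} (Λ : TGraph V) (t : ℝ) : TGraph V :=
  fun e => (Λ e).image fun l => if l < t then t - l else l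

/-- The rank of a time `x` among all the labels of the sample `ω`: the number of labels
(on genuine, non-loop, edges) that are at most `x`. -/
def rank {V : Type*} [Fintype V] [DecidableEq V] (ω : Sym2 V → LabelSpace) (x : ℝ) : ℕ :=
  ∑ e ∈ Finset.univ.filter (fun e : Sym2 V => ¬ e.IsDiag),
    Nat.card {i : Fin (ω e).1 // (ω e).2 i ≤ x}

/-- The order discretization `𝒢^O` of the sample `ω`: each label is replaced by its rank
among all labels. -/
def orderDisc {V : Type*} [Fintype V] [DecidableEq V] (ω : Sym2 V → LabelSpace) :
    TGraph V :=
  fun e => if e.IsDiag then ∅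
    else Finset.image (fun i => (rank ω ((ω e).2 i) : ℝ)) Finset.univ

/-!
Cut `(0, 1]` into about `1/δ` windows of length `δ` and each window into `|E_H|` slots, and assign
a slot to every edge of `H` compatibly with `P`. If for some embedding `Φ` of `V_H` and some window
the first label of every edge `Φ(e)` lies in the slot of `e`, then a `δ`-motif occurs. Up to
constants each such event has probability `δ^|E_H|`, and the number of these events that occur is
shown to be positive by the second moment method. Two events are independent unless the copies
share edges, and then they are incompatible unless they use the same window. Hence pairs of copies
which share the edges of a subgraph with `s ≥ 1` edges and `v` vertices contribute, relative to the
squared mean, at most a constant times `1 / (δ^(s-1) n^v)`. For `s = 1` this tends to zero as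
`v ≥ 1`, and for `s ≥ 2` because `v ≥ ρ_H (s-1)` and `δ n^ρ_H → ∞`.
-/

section SecondMoment

variable {Ω I : Type*} [MeasurableSpace Ω] [Fintype I] {μ : Measure Ω}

lemma memLp_indicator_one [IsFiniteMeasure μ] {A : Set Ω} (hA : MeasurableSet A) (p : ℝ≥0∞) :
    MemLp (A.indicator (1 : Ω → ℝ)) p μ :=
  (memLp_const (1 : ℝ)).indicator hA

lemma covariance_indicator_one [IsProbabilityMeasure μ] {A B : Set Ω} (hA : MeasurableSet A)
    (hB : MeasurableSet B) :
    cov[A.indicator (1 : Ω → ℝ), B.indicator 1; μ] = μ.real (A ∩ B) - μ.real A * μ.real B := by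
  rw [covariance_eq_sub (memLp_indicator_one hA 2) (memLp_indicator_one hB 2),
    ← Set.inter_indicator_one, integral_indicator_one (hA.inter hB), integral_indicator_one hA,
    integral_indicator_one hB]

theorem one_sub_measureReal_iUnion_le [IsProbabilityMeasure μ] {A : I → Set Ω}
    (hA : ∀ i, MeasurableSet (A i)) (hpos : 0 < ∑ i, μ.real (A i)) :
    1 - μ.real (⋃ i, A i) ≤
      (∑ i, ∑ j, (μ.real (A i ∩ A j) - μ.real (A i) * μ.real (A j))) /
        (∑ i, μ.real (A i)) ^ 2 := by
  let X : Ω → ℝ := fun ω => ∑ i, (A i).indicator 1 ω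
  have hindicator i : MemLp ((A i).indicator (1 : Ω → ℝ)) 2 μ := memLp_indicator_one (hA i) 2
  have hX : MemLp X 2 μ := memLp_finsetSum _ fun i _ => hindicator i
  have hmean : μ[X] = ∑ i, μ.real (A i) := by
    rw [integral_finsetSum _ fun i _ => (hindicator i).integrable one_le_two]
    exact Finset.sum_congr rfl fun i _ => integral_indicator_one (hA i)
  have hvar : Var[X; μ] = ∑ i, ∑ j, (μ.real (A i ∩ A j) - μ.real (A i) * μ.real (A j)) := by
    rw [variance_fun_sum hindicator]
    exact Finset.sum_congr rfl fun i _ => Finset.sum_congr rfl fun j _ =>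
      covariance_indicator_one (hA i) (hA j)
  have hsub : (⋃ i, A i)ᶜ ⊆ {ω | μ[X] ≤ |X ω - μ[X]|} := by
    intro ω hω
    have hzero : X ω = 0 := Finset.sum_eq_zero fun i _ =>
      indicator_of_notMem (fun hi => hω (mem_iUnion_of_mem i hi)) 1
    simpa [hzero] using le_abs_self (μ[X])
  rw [← probReal_compl_eq_one_sub (MeasurableSet.iUnion hA), ← hvar, ← hmean]
  refine ENNReal.toReal_le_of_le_ofReal (div_nonneg (variance_nonneg X μ) (sq_nonneg _)) ?_
  exact (measure_mono hsub).trans (meas_ge_le_variance_div_sq hX (hmean ▸ hpos))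

end SecondMoment

section PatternEvents

variable {A ι X : Type*}

/-- The event that a configuration `ω : ι → X`, read along the copy `f : A → ι` of the pattern `E`,
takes values in the prescribed sets `B a`. -/
def patternEvent (E : Finset A) (f : A → ι) (B : A → Set X) : Set (ι → X) :=
  {ω | ∀ a ∈ E, ω (f a) ∈ B a}

/-- The part of the copy `f` of `E` that is shared with the copy `g`, as a subset of the pattern
`E` itself. -/
def overlap [DecidableEq ι] (E : Finset A) (f g : A → ι) : Finset A :=
  {a ∈ E | f a ∈ E.image g}

lemma overlap_subset [DecidableEq ι] (E : Finset A) (f g : A → ι) : overlap E f g ⊆ E :=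
  Finset.filter_subset _ _

variable {E : Finset A}

lemma disjoint_patternEvent_of_overlap_nonempty [DecidableEq ι] {f g : A → ι} {B C : A → Set X}
    (hBC : ∀ a ∈ E, ∀ b ∈ E, Disjoint (B a) (C b)) (hfg : (overlap E f g).Nonempty) :
    Disjoint (patternEvent E f B) (patternEvent E g C) := by
  obtain ⟨a, ha⟩ := hfg
  obtain ⟨haE, haimage⟩ := Finset.mem_filter.1 ha
  obtain ⟨b, hb, hba⟩ := Finset.mem_image.1 haimage
  exact disjoint_left.2 fun ω hf hg =>
    disjoint_left.1 (hBC a haE b hb) (hf a haE) (hba ▸ hg b hb)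

variable [MeasurableSpace X]

lemma measurableSet_patternEvent (f : A → ι) {B : A → Set X}
    (hB : ∀ a ∈ E, MeasurableSet (B a)) : MeasurableSet (patternEvent E f B) := by
  have hinter : patternEvent E f B = ⋂ a ∈ E, (fun ω : ι → X => ω (f a)) ⁻¹' B a := by
    ext ω
    simp [patternEvent]
  rw [hinter]
  exact Finset.measurableSet_biInter _ fun a ha => measurable_pi_apply (f a) (hB a ha)

variable [Fintype ι] {ν : Measure X} [IsProbabilityMeasure ν]

lemma measureReal_patternEvent {f : A → ι} (hf : InjOn f E) {B : A → Set X}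
    (hB : ∀ a ∈ E, MeasurableSet (B a)) :
    (Measure.pi fun _ : ι => ν).real (patternEvent E f B) = ∏ a ∈ E, ν.real (B a) := by
  have hindep : iIndepFun (fun (a : E) (ω : ι → X) => ω (f a)) (Measure.pi fun _ : ι => ν) :=
    (iIndepFun_pi (X := fun _ => id) fun _ => aemeasurable_id).precomp hf.injective
  have hinter : patternEvent E f B =
      ⋂ a ∈ (Finset.univ : Finset E), (fun ω : ι → X => ω (f a)) ⁻¹' B a := by
    ext ω
    simp [patternEvent]
  have heval (a : E) :
      (Measure.pi fun _ : ι => ν) ((fun ω => ω (f a)) ⁻¹' B a) = ν (B a) :=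
    (measurePreserving_eval (fun _ : ι => ν) (f a)).measure_preimage
      (hB a a.2).nullMeasurableSet
  rw [hinter, measureReal_def, hindep.measure_inter_preimage_eq_mul Finset.univ
    fun a _ => hB a a.2, ENNReal.toReal_prod, ← Finset.prod_coe_sort E]
  exact Finset.prod_congr rfl fun a _ => by rw [heval, measureReal_def]

variable [DecidableEq ι]

lemma measureReal_patternEvent_inter_le [DecidableEq A] {f g : A → ι} (hf : InjOn f E)
    (hg : InjOn g E) {B C : A → Set X} (hB : ∀ a ∈ E, MeasurableSet (B a))
    (hC : ∀ a ∈ E, MeasurableSet (C a)) :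
    (Measure.pi fun _ : ι => ν).real (patternEvent E f B ∩ patternEvent E g C) ≤
      (∏ a ∈ E, ν.real (C a)) * ∏ a ∈ E \ overlap E f g, ν.real (B a) := by
  have hinj : InjOn (Sum.elim g f) (E.disjSum (E \ overlap E f g) : Finset (A ⊕ A)) := by
    have hne {a b : A} (ha : a ∈ E) (hb : b ∈ E \ overlap E f g) : g a ≠ f b := fun h =>
      (Finset.mem_sdiff.1 hb).2 <|
        Finset.mem_filter.2 ⟨(Finset.mem_sdiff.1 hb).1, Finset.mem_image.2 ⟨a, ha, h⟩⟩
    rintro (a | a) ha (b | b) hb h <;>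
      simp only [Finset.mem_coe, Finset.inl_mem_disjSum, Finset.inr_mem_disjSum] at ha hb
    · exact congrArg Sum.inl (hg ha hb h)
    · exact (hne ha hb h).elim
    · exact (hne hb ha h.symm).elim
    · exact congrArg Sum.inr (hf (Finset.sdiff_subset ha) (Finset.sdiff_subset hb) h)
  have hmeas : ∀ a ∈ E.disjSum (E \ overlap E f g), MeasurableSet (Sum.elim C B a) := by
    rintro (a | a) ha
    · exact hC a (Finset.inl_mem_disjSum.1 ha)
    · exact hB a (Finset.sdiff_subset (Finset.inr_mem_disjSum.1 ha))
  have hsub : patternEvent E f B ∩ patternEvent E g C ⊆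
      patternEvent (E.disjSum (E \ overlap E f g)) (Sum.elim g f) (Sum.elim C B) := by
    rintro ω ⟨hωf, hωg⟩ (a | a) ha
    · exact hωg a (Finset.inl_mem_disjSum.1 ha)
    · exact hωf a (Finset.sdiff_subset (Finset.inr_mem_disjSum.1 ha))
  refine (measureReal_mono hsub).trans_eq ?_
  rw [measureReal_patternEvent hinj hmeas, Finset.prod_disjSum]
  rfl

variable {J : Type*} {B : J → A → Set X} {p : ℝ}

/-- Copies without common coordinates are independent, and copies in different windows exclude
each other as soon as they share a coordinate. -/
lemma measureReal_patternEvent_inter_sub_le [DecidableEq J] {f g : A → ι} (hf : InjOn f E)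
    (hg : InjOn g E) (hB : ∀ j, ∀ a ∈ E, MeasurableSet (B j a)) (hp : 0 < p)
    (hBp : ∀ j, ∀ a ∈ E, ν.real (B j a) = p)
    (hdisj : ∀ j k, j ≠ k → ∀ a ∈ E, ∀ b ∈ E, Disjoint (B j a) (B k b)) (j k : J) :
    (Measure.pi fun _ : ι => ν).real (patternEvent E f (B j) ∩ patternEvent E g (B k)) -
        p ^ E.card * p ^ E.card ≤
      if j = k ∧ (overlap E f g).Nonempty then
        (p ^ E.card) ^ 2 / p ^ (overlap E f g).card else 0 := by
  classical
  have hinter := measureReal_patternEvent_inter_le (ν := ν) hf hg (hB j) (hB k)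
  rw [Finset.prod_congr rfl (hBp k),
    Finset.prod_congr rfl fun a ha => hBp j a (Finset.sdiff_subset ha), Finset.prod_const,
    Finset.prod_const, Finset.card_sdiff_of_subset (overlap_subset E f g),
    pow_sub₀ p hp.ne' (Finset.card_le_card (overlap_subset E f g))] at hinter
  have hsq : 0 < p ^ E.card * p ^ E.card := by positivity
  by_cases hne : (overlap E f g).Nonempty
  · by_cases hjk : j = k
    · rw [if_pos ⟨hjk, hne⟩, div_eq_mul_inv, sq, mul_assoc]
      linarith
    · rw [if_neg fun h => hjk h.1, disjoint_iff_inter_eq_empty.1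
        (disjoint_patternEvent_of_overlap_nonempty (hdisj j k hjk) hne), measureReal_empty]
      linarith
  · rw [if_neg fun h => hne h.2]
    rw [Finset.not_nonempty_iff_eq_empty.1 hne] at hinter
    simpa using hinter

variable {I : Type*} [Fintype I] [Nonempty I] [Fintype J] [Nonempty J] {f : I → A → ι}

/-- The second moment method for copies `f i` of a pattern `E`, each of which may be realised in
any of the windows `j : J`. Since distinct windows are disjoint, only pairs of copies in the same
window contribute, and this is where the factor `1 / |J|` comes from. -/
theorem one_sub_measureReal_iUnion_patternEvent_le (hf : ∀ i, InjOn (f i) E)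
    (hB : ∀ j, ∀ a ∈ E, MeasurableSet (B j a)) (hp : 0 < p)
    (hBp : ∀ j, ∀ a ∈ E, ν.real (B j a) = p)
    (hdisj : ∀ j k, j ≠ k → ∀ a ∈ E, ∀ b ∈ E, Disjoint (B j a) (B k b)) :
    1 - (Measure.pi fun _ : ι => ν).real (⋃ x : I × J, patternEvent E (f x.1) (B x.2)) ≤
      ∑ x : I × I with (overlap E (f x.1) (f x.2)).Nonempty,
        1 / (Fintype.card I ^ 2 * (Fintype.card J * p ^ (overlap E (f x.1) (f x.2)).card)) := by
  classical
  set μ := Measure.pi fun _ : ι => ν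
  set N : ℝ := (Fintype.card I : ℝ)
  set T : ℝ := (Fintype.card J : ℝ)
  have hN : 0 < N := by simp [N, Fintype.card_pos]
  have hT : 0 < T := by simp [T, Fintype.card_pos]
  have hprob (x : I × J) : μ.real (patternEvent E (f x.1) (B x.2)) = p ^ E.card := by
    rw [measureReal_patternEvent (hf x.1) (hB x.2), Finset.prod_congr rfl (hBp x.2),
      Finset.prod_const]
  have hmean : ∑ x : I × J, μ.real (patternEvent E (f x.1) (B x.2)) = N * T * p ^ E.card := by
    simp [hprob, N, T]
  have hcov : ∑ x : I × J, ∑ y : I × J,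
      (μ.real (patternEvent E (f x.1) (B x.2) ∩ patternEvent E (f y.1) (B y.2)) -
        μ.real (patternEvent E (f x.1) (B x.2)) * μ.real (patternEvent E (f y.1) (B y.2))) ≤
      ∑ x : I × I with (overlap E (f x.1) (f x.2)).Nonempty,
        T * ((p ^ E.card) ^ 2 / p ^ (overlap E (f x.1) (f x.2)).card) := by
    simp only [hprob]
    refine (Finset.sum_le_sum fun x _ => Finset.sum_le_sum fun y _ =>
      measureReal_patternEvent_inter_sub_le (hf x.1) (hf y.1) hB hp hBp hdisj x.2 y.2).trans_eq ?_
    simp [ite_and, Fintype.sum_prod_type, Finset.sum_filter, Finset.mul_sum, T]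
  have hbound := one_sub_measureReal_iUnion_le (μ := μ)
    (A := fun x : I × J => patternEvent E (f x.1) (B x.2))
    (fun x => measurableSet_patternEvent (f x.1) (hB x.2)) (by rw [hmean]; positivity)
  refine hbound.trans ?_
  rw [hmean, div_le_iff₀ (by positivity), Finset.sum_mul]
  refine hcov.trans_eq (Finset.sum_congr rfl fun x _ => ?_)
  field_simp

end PatternEvents

section CountingCopies

variable {VH V : Type*}

lemma card_pow_le_two_pow_mul_card_embedding [Fintype VH] [Fintype V]
    (hV : 2 * Fintype.card VH ≤ Fintype.card V) :
    Fintype.card V ^ Fintype.card VH ≤ 2 ^ Fintype.card VH * Fintype.card (VH ↪ V) := by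
  calc Fintype.card V ^ Fintype.card VH
      ≤ (2 * (Fintype.card V + 1 - Fintype.card VH)) ^ Fintype.card VH :=
        Nat.pow_le_pow_left (by lia) _
    _ = 2 ^ Fintype.card VH * (Fintype.card V + 1 - Fintype.card VH) ^ Fintype.card VH :=
        mul_pow _ _ _
    _ ≤ 2 ^ Fintype.card VH * Fintype.card (VH ↪ V) := by
        rw [Fintype.card_embedding_eq]
        exact Nat.mul_le_mul_left _ (Nat.pow_sub_le_descFactorial _ _)

variable [DecidableEq VH]

/-- The vertex set of the subgraph spanned by the edge set `S`. -/
def coveredVerts (S : Finset (Sym2 VH)) : Finset VH := S.biUnion Sym2.toFinset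

lemma mem_coveredVerts {S : Finset (Sym2 VH)} {v : VH} :
    v ∈ coveredVerts S ↔ ∃ e ∈ S, v ∈ e := by
  simp [coveredVerts]

variable [Fintype VH] [Fintype V]

section

variable [DecidableEq V]

lemma card_embedding_forall_mem_le (s : Finset VH) (t : Finset V) :
    ({Φ : VH ↪ V | ∀ a ∈ s, Φ a ∈ t} : Finset (VH ↪ V)).card ≤
      t.card ^ s.card * Fintype.card V ^ (Fintype.card VH - s.card) := by
  let target : VH → Finset V := fun a => if a ∈ s then t else Finset.univ
  calc ({Φ : VH ↪ V | ∀ a ∈ s, Φ a ∈ t} : Finset (VH ↪ V)).card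
      ≤ (Fintype.piFinset target).card := by
        refine Finset.card_le_card_of_injOn (fun Φ => (Φ : VH → V)) (fun Φ hΦ => ?_)
          DFunLike.coe_injective.injOn
        refine Fintype.mem_piFinset.2 fun a => ?_
        by_cases ha : a ∈ s
        · simpa only [target, if_pos ha] using (Finset.mem_filter.1 hΦ).2 a ha
        · simp only [target, if_neg ha, Finset.mem_univ]
    _ = t.card ^ s.card * Fintype.card V ^ (Fintype.card VH - s.card) := by
        simp [target, Fintype.card_piFinset, apply_ite Finset.card, Finset.prod_ite,
          Finset.filter_not, Finset.card_sdiff_of_subset]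

lemma card_embedding_overlap_eq_le (E S : Finset (Sym2 VH)) (Ψ : VH ↪ V) :
    ({Φ : VH ↪ V | overlap E (Sym2.map Φ) (Sym2.map Ψ) = S} : Finset (VH ↪ V)).card ≤
      Fintype.card VH ^ (coveredVerts S).card *
        Fintype.card V ^ (Fintype.card VH - (coveredVerts S).card) := by
  refine (Finset.card_le_card fun Φ hΦ => ?_).trans
    ((card_embedding_forall_mem_le (coveredVerts S) (Finset.univ.map Ψ)).trans_eq
      (by rw [Finset.card_map, Finset.card_univ]))
  refine Finset.mem_filter.2 ⟨Finset.mem_univ Φ, fun a ha => ?_⟩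
  obtain ⟨e, he, hae⟩ := mem_coveredVerts.1 ha
  rw [← (Finset.mem_filter.1 hΦ).2] at he
  obtain ⟨e', -, hee'⟩ := Finset.mem_image.1 (Finset.mem_filter.1 he).2
  obtain ⟨b, -, hb⟩ := Sym2.mem_map.1 (hee' ▸ Sym2.mem_map.2 ⟨a, hae, rfl⟩)
  exact Finset.mem_map.2 ⟨b, Finset.mem_univ b, hb⟩

lemma card_pairs_overlap_eq_mul_le (hV : 2 * Fintype.card VH ≤ Fintype.card V)
    (E S : Finset (Sym2 VH)) :
    ({x : (VH ↪ V) × (VH ↪ V) | overlap E (Sym2.map x.1) (Sym2.map x.2) = S} :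
        Finset ((VH ↪ V) × (VH ↪ V))).card * Fintype.card V ^ (coveredVerts S).card ≤
      2 ^ Fintype.card VH * Fintype.card VH ^ (coveredVerts S).card *
        Fintype.card (VH ↪ V) ^ 2 := by
  set v := Fintype.card VH
  set n := Fintype.card V
  set N := Fintype.card (VH ↪ V)
  set c := (coveredVerts S).card
  have hfiber : ({x : (VH ↪ V) × (VH ↪ V) | overlap E (Sym2.map x.1) (Sym2.map x.2) = S} :
      Finset ((VH ↪ V) × (VH ↪ V))).card = ∑ Ψ : VH ↪ V,
        ({Φ : VH ↪ V | overlap E (Sym2.map Φ) (Sym2.map Ψ) = S} : Finset (VH ↪ V)).card := by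
    simp only [Finset.card_filter, Fintype.sum_prod_type_right]
  calc _ ≤ (N * (v ^ c * n ^ (v - c))) * n ^ c := by
        rw [hfiber]
        refine Nat.mul_le_mul_right _ ?_
        simpa [N] using Finset.sum_le_card_nsmul Finset.univ _ _ fun (Ψ : VH ↪ V) _ =>
          card_embedding_overlap_eq_le E S Ψ
    _ = N * v ^ c * n ^ v := by
        rw [← pow_sub_mul_pow n (Finset.card_le_univ (coveredVerts S))]
        ring
    _ ≤ N * v ^ c * (2 ^ v * N) :=
        Nat.mul_le_mul_left (N * v ^ c) (card_pow_le_two_pow_mul_card_embedding hV)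
    _ = 2 ^ v * v ^ c * N ^ 2 := by ring

end

theorem one_sub_measureReal_iUnion_copies_le {X J : Type*} [MeasurableSpace X] {ν : Measure X}
    [IsProbabilityMeasure ν] [Nonempty V] [Fintype J] [Nonempty J] {E : Finset (Sym2 VH)}
    {B : J → Sym2 VH → Set X} {p : ℝ} (hV : 2 * Fintype.card VH ≤ Fintype.card V)
    (hB : ∀ j, ∀ e ∈ E, MeasurableSet (B j e)) (hp : 0 < p)
    (hBp : ∀ j, ∀ e ∈ E, ν.real (B j e) = p)
    (hdisj : ∀ j k, j ≠ k → ∀ e ∈ E, ∀ f ∈ E, Disjoint (B j e) (B k f)) :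
    1 - (Measure.pi fun _ : Sym2 V => ν).real
        (⋃ x : (VH ↪ V) × J, patternEvent E (Sym2.map x.1) (B x.2)) ≤
      ∑ S ∈ E.powerset with S.Nonempty,
        2 ^ Fintype.card VH * (Fintype.card VH : ℝ) ^ (coveredVerts S).card /
          (Fintype.card J * p ^ S.card * Fintype.card V ^ (coveredVerts S).card) := by
  classical
  have hcard : Fintype.card VH ≤ Fintype.card V := by lia
  have : Nonempty (VH ↪ V) := Function.Embedding.nonempty_of_card_le hcard
  refine (one_sub_measureReal_iUnion_patternEvent_le
    (fun Φ : VH ↪ V => (Sym2.map.injective Φ.injective).injOn) hB hp hBp hdisj).trans ?_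
  rw [← Finset.sum_fiberwise_of_maps_to (t := E.powerset.filter (·.Nonempty))
    (g := fun x : (VH ↪ V) × (VH ↪ V) => overlap E (Sym2.map x.1) (Sym2.map x.2))
    fun x hx => Finset.mem_filter.2
      ⟨Finset.mem_powerset.2 (overlap_subset E _ _), (Finset.mem_filter.1 hx).2⟩]
  refine Finset.sum_le_sum fun S _ => ?_
  have hcount : ((({x : (VH ↪ V) × (VH ↪ V) | overlap E (Sym2.map x.1) (Sym2.map x.2) = S} :
      Finset ((VH ↪ V) × (VH ↪ V))).card : ℕ) : ℝ) * Fintype.card V ^ (coveredVerts S).card ≤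
        2 ^ Fintype.card VH * (Fintype.card VH : ℝ) ^ (coveredVerts S).card *
          Fintype.card (VH ↪ V) ^ 2 :=
    mod_cast card_pairs_overlap_eq_mul_le hV E S
  calc _ ≤ ∑ x : (VH ↪ V) × (VH ↪ V) with overlap E (Sym2.map x.1) (Sym2.map x.2) = S,
        1 / ((Fintype.card (VH ↪ V) : ℝ) ^ 2 * (Fintype.card J * p ^ S.card)) := by
        rw [Finset.sum_congr rfl fun x hx => by rw [(Finset.mem_filter.1 hx).2]]
        exact Finset.sum_le_sum_of_subset_of_nonneg
          (Finset.filter_subset_filter _ (Finset.filter_subset _ _)) fun _ _ _ => by positivity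
    _ ≤ _ := by
        rw [Finset.sum_const, nsmul_eq_mul, mul_one_div,
          div_le_div_iff₀ (by positivity) (by positivity)]
        nlinarith [mul_le_mul_of_nonneg_right hcount
          (by positivity : 0 ≤ Fintype.card J * p ^ S.card)]

end CountingCopies

section LabelSpace

/-- The event that the edge carries a label and that the first sampled one lies in `s`. Ignoring all
later labels makes its probability a product, `P[Q > 0] * ν s`. -/
def firstLabelIn (s : Set ℝ) : Set LabelSpace := {l | ∃ h : 0 < l.1, l.2 ⟨0, h⟩ ∈ s}

lemma sigmaMk_zero_preimage_firstLabelIn (s : Set ℝ) :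
    Sigma.mk 0 ⁻¹' firstLabelIn s = ∅ := by
  ext
  simp [firstLabelIn]

lemma sigmaMk_succ_preimage_firstLabelIn (s : Set ℝ) (k : ℕ) :
    Sigma.mk (k + 1) ⁻¹' firstLabelIn s = Function.eval 0 ⁻¹' s := by
  ext
  simp [firstLabelIn]

lemma measurableSet_firstLabelIn {s : Set ℝ} (hs : MeasurableSet s) :
    MeasurableSet (firstLabelIn s) := by
  refine MeasurableSpace.measurableSet_iInf.2 fun k => ?_
  change MeasurableSet (Sigma.mk k ⁻¹' firstLabelIn s)
  cases k with
  | zero => simp only [sigmaMk_zero_preimage_firstLabelIn, MeasurableSet.empty]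
  | succ k =>
    rw [sigmaMk_succ_preimage_firstLabelIn]
    exact measurable_pi_apply 0 hs

lemma disjoint_firstLabelIn {s t : Set ℝ} (hst : Disjoint s t) :
    Disjoint (firstLabelIn s) (firstLabelIn t) :=
  disjoint_left.2 fun _ ⟨_, hs⟩ ⟨_, ht⟩ => disjoint_left.1 hst hs ht

variable {ν : Measure ℝ} {ψ : Measure ℕ}

lemma edgeMeasure_apply {s : Set LabelSpace} (hs : MeasurableSet s) :
    edgeMeasure ν ψ s =
      ∑' k, ψ {k} * (Measure.pi fun _ => ν) (Sigma.mk (β := fun k => Fin k → ℝ) k ⁻¹' s) := by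
  have hmk (k : ℕ) : Measurable (Sigma.mk (β := fun k => Fin k → ℝ) k) :=
    fun _ ht => MeasurableSpace.measurableSet_iInf.1 ht k
  simp only [edgeMeasure, Measure.sum_apply _ hs, Measure.smul_apply, smul_eq_mul,
    Measure.map_apply (hmk _) hs]

instance [IsProbabilityMeasure ν] [IsProbabilityMeasure ψ] :
    IsProbabilityMeasure (edgeMeasure ν ψ) where
  measure_univ := by
    simpa [edgeMeasure_apply] using ψ.tsum_indicator_apply_singleton univ MeasurableSet.univ

instance {V : Type*} [Fintype V] [DecidableEq V] [IsProbabilityMeasure ν]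
    [IsProbabilityMeasure ψ] : IsProbabilityMeasure (model V ν ψ) := by
  unfold model
  infer_instance

lemma edgeMeasure_firstLabelIn [IsProbabilityMeasure ν] {s : Set ℝ} (hs : MeasurableSet s) :
    edgeMeasure ν ψ (firstLabelIn s) = ψ {k | 0 < k} * ν s := by
  rw [edgeMeasure_apply (measurableSet_firstLabelIn hs),
    ← ψ.tsum_indicator_apply_singleton {k | 0 < k} (MeasurableSet.of_discrete),
    ← ENNReal.tsum_mul_right]
  refine tsum_congr fun k => ?_
  cases k with
  | zero => simp [sigmaMk_zero_preimage_firstLabelIn]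
  | succ k =>
    rw [sigmaMk_succ_preimage_firstLabelIn,
      (measurePreserving_eval (fun _ : Fin (k + 1) => ν) 0).measure_preimage hs.nullMeasurableSet,
      indicator_of_mem (mem_ofPred.2 k.succ_pos)]

lemma edgeMeasure_real_firstLabelIn [IsProbabilityMeasure ν] {s : Set ℝ} (hs : MeasurableSet s) :
    (edgeMeasure ν ψ).real (firstLabelIn s) = lmdPos ψ * ν.real s := by
  rw [measureReal_def, edgeMeasure_firstLabelIn hs, ENNReal.toReal_mul, lmdPos, measureReal_def]

lemma lmdPos_pos (hψ : IsLMD ψ) : 0 < lmdPos ψ := by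
  have := hψ.1
  refine ENNReal.toReal_pos (fun hzero => hψ.2.2.2.ne' ?_) (measure_ne_top ψ _)
  refine integral_eq_zero_of_ae (ae_iff.2 ?_)
  simpa [Nat.pos_iff_ne_zero] using hzero

end LabelSpace

section LabelWindow

instance : IsProbabilityMeasure unif01 := ⟨by simp [unif01]⟩

/-- The half-open window `(jδ, (j + 1)δ]` is cut into `m` slots of equal length; this is the slot
number `s`. Labels chosen from the slots of one window differ by less than `δ` and are ordered like
the slot numbers. -/
def labelWindow (δ : ℝ) (m j s : ℕ) : Set ℝ :=
  Ioc (j * δ + s * (δ / m)) (j * δ + (s + 1) * (δ / m))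

variable {δ : ℝ} {m j k s t : ℕ}

lemma measurableSet_labelWindow : MeasurableSet (labelWindow δ m j s) := measurableSet_Ioc

lemma labelWindow_subset_Ioc (hδ : 0 ≤ δ) (hs : s < m) :
    labelWindow δ m j s ⊆ Ioc (j * δ) ((j + 1) * δ) := by
  have hm : (0 : ℝ) < m := mod_cast Nat.zero_lt_of_lt hs
  have hlast : (s + 1) * (δ / m) ≤ δ := by
    rw [← mul_div_assoc, div_le_iff₀ hm, mul_comm]
    exact mul_le_mul_of_nonneg_left (mod_cast hs) hδ
  exact Ioc_subset_Ioc (le_add_of_nonneg_right (by positivity)) (by linarith)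

lemma disjoint_labelWindow (hδ : 0 ≤ δ) (hs : s < m) (ht : t < m) (hjk : j ≠ k) :
    Disjoint (labelWindow δ m j s) (labelWindow δ m k t) := by
  have hmono : Monotone fun i : ℕ => (i : ℝ) * δ :=
    Nat.mono_cast.mul_const hδ
  refine Disjoint.mono (labelWindow_subset_Ioc hδ hs) (labelWindow_subset_Ioc hδ ht) ?_
  simpa using hmono.pairwise_disjoint_on_Ioc_succ hjk

lemma lt_of_mem_labelWindow (hδ : 0 ≤ δ) (hst : s < t) {x y : ℝ}
    (hx : x ∈ labelWindow δ m j s) (hy : y ∈ labelWindow δ m j t) : x < y :=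
  (hx.2.trans (by gcongr; exact mod_cast hst)).trans_lt hy.1

lemma sub_lt_of_mem_labelWindow (hδ : 0 ≤ δ) (hs : s < m) (ht : t < m) {x y : ℝ}
    (hx : x ∈ labelWindow δ m j s) (hy : y ∈ labelWindow δ m j t) : x - y < δ := by
  linarith [(labelWindow_subset_Ioc hδ hs hx).2, (labelWindow_subset_Ioc hδ ht hy).1]

lemma unif01_real_labelWindow (hδ : 0 ≤ δ) (hs : s < m) (hj : (j + 1) * δ ≤ 1) :
    unif01.real (labelWindow δ m j s) = δ / m := by
  have hsub : labelWindow δ m j s ⊆ Ioc 0 1 :=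
    (labelWindow_subset_Ioc hδ hs).trans (Ioc_subset_Ioc (by positivity) hj)
  rw [measureReal_def, unif01, Measure.restrict_apply measurableSet_labelWindow,
    inter_eq_self_of_subset_left hsub, labelWindow, Real.volume_Ioc, add_sub_add_left_eq_sub,
    ← sub_mul, add_sub_cancel_left, one_mul, ENNReal.toReal_ofReal (by positivity)]

end LabelWindow

section Motif

lemma StrictPartialOrderOn.exists_rank_lt {α : Type*} {s : Set α} {P : α → α → Prop}
    (hP : StrictPartialOrderOn s P) (hs : s.Finite) :
    ∃ σ : α → ℕ, (∀ a ∈ s, σ a < s.ncard) ∧ ∀ a b, P a b → σ a < σ b := by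
  obtain ⟨hirrefl, htrans, hmem⟩ := hP
  have hsub a : {c | P c a} ⊆ s := fun c hc => (hmem c a hc).1
  refine ⟨fun a => {c | P c a}.ncard, fun a ha => ?_, fun a b hab => ?_⟩
  · exact ncard_lt_ncard ((ssubset_iff_of_subset (hsub a)).2 ⟨a, ha, hirrefl a⟩) hs
  · exact ncard_lt_ncard ((ssubset_iff_of_subset fun c hc => htrans c a b hc hab).2
      ⟨a, hab, hirrefl a⟩) (hs.subset (hsub b))

variable {VH V : Type*} {H : SimpleGraph VH} {P : Sym2 VH → Sym2 VH → Prop}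

lemma contains_mono {Λ : TGraph V} {δ δ' : ℝ} (hδ : δ ≤ δ') (h : Contains H P Λ δ) :
    Contains H P Λ δ' := by
  obtain ⟨Φ, hΦ, lab, hmem, hlt, hdiff⟩ := h
  exact ⟨Φ, hΦ, lab, hmem, hlt, fun e he f hf => (hdiff e he f hf).trans_le hδ⟩

variable [DecidableEq V]

lemma exists_mem_toTGraph_of_firstLabelIn {ω : Sym2 V → LabelSpace} {e : Sym2 V} {s : Set ℝ}
    (he : ¬ e.IsDiag) (hω : ω e ∈ firstLabelIn s) : ∃ x ∈ toTGraph ω e, x ∈ s := by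
  obtain ⟨hpos, hs⟩ := hω
  refine ⟨_, ?_, hs⟩
  rw [toTGraph, if_neg he]
  exact Finset.mem_image_of_mem _ (Finset.mem_univ _)

lemma contains_of_mem_patternEvent [Fintype H.edgeSet]
    (hPmem : ∀ e f, P e f → e ∈ H.edgeSet ∧ f ∈ H.edgeSet) {σ : Sym2 VH → ℕ} {m : ℕ}
    (hσm : ∀ e ∈ H.edgeSet, σ e < m) (hσP : ∀ e f, P e f → σ e < σ f) {δ : ℝ} (hδ : 0 ≤ δ)
    (Φ : VH ↪ V) {j : ℕ} {ω : Sym2 V → LabelSpace}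
    (hω : ω ∈ patternEvent H.edgeFinset (Sym2.map Φ)
      fun e => firstLabelIn (labelWindow δ m j (σ e))) :
    Contains H P (toTGraph ω) δ := by
  have hlab : ∀ e ∈ H.edgeSet,
      ∃ x ∈ toTGraph ω (Sym2.map Φ e), x ∈ labelWindow δ m j (σ e) := fun e he =>
    exists_mem_toTGraph_of_firstLabelIn
      (fun hdiag => H.not_isDiag_of_mem_edgeSet he ((Sym2.isDiag_map Φ.injective).1 hdiag))
      (hω e (SimpleGraph.mem_edgeFinset.2 he))
  choose! lab hmem hwindow using hlab
  refine ⟨Φ, Φ.injective, lab, hmem, fun e f hef => ?_, fun e he f hf => ?_⟩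
  · exact lt_of_mem_labelWindow hδ (hσP e f hef) (hwindow e (hPmem e f hef).1)
      (hwindow f (hPmem e f hef).2)
  · exact sub_lt_of_mem_labelWindow hδ (hσm e he) (hσm f hf) (hwindow e he) (hwindow f hf)

variable [Fintype VH] [DecidableEq VH] [Fintype V] [Nonempty V] [DecidableRel H.Adj]

theorem one_sub_measureReal_contains_le_of_mul_le_one (hP : StrictPartialOrderOn H.edgeSet P)
    (hH : H.edgeFinset.Nonempty) {ψ : Measure ℕ} [IsProbabilityMeasure ψ] (hψ : 0 < lmdPos ψ)
    {δ : ℝ} (hδ : 0 < δ) {J : ℕ} (hJ : 0 < J) (hJδ : J * δ ≤ 1)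
    (hV : 2 * Fintype.card VH ≤ Fintype.card V) :
    1 - (contModel V ψ).real {ω | Contains H P (toTGraph ω) δ} ≤
      ∑ S ∈ H.edgeFinset.powerset with S.Nonempty,
        2 ^ Fintype.card VH * (Fintype.card VH : ℝ) ^ (coveredVerts S).card /
          (J * (lmdPos ψ * (δ / H.edgeFinset.card)) ^ S.card *
            Fintype.card V ^ (coveredVerts S).card) := by
  have hm : H.edgeSet.ncard = H.edgeFinset.card := ncard_eq_toFinset_card' _
  obtain ⟨σ, hσm, hσP⟩ := hP.exists_rank_lt H.edgeSet.toFinite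
  rw [hm] at hσm
  have hσ {e} (he : e ∈ H.edgeFinset) : σ e < H.edgeFinset.card :=
    hσm e (SimpleGraph.mem_edgeFinset.1 he)
  have : Nonempty (Fin J) := ⟨⟨0, hJ⟩⟩
  let B : Fin J → Sym2 VH → Set LabelSpace := fun j e =>
    firstLabelIn (labelWindow δ H.edgeFinset.card j (σ e))
  have hB (j : Fin J) : ∀ e ∈ H.edgeFinset,
      (edgeMeasure unif01 ψ).real (B j e) = lmdPos ψ * (δ / H.edgeFinset.card) := fun e he => by
    have hj : ((j : ℕ) + 1 : ℝ) ≤ J := mod_cast j.2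
    rw [edgeMeasure_real_firstLabelIn measurableSet_labelWindow,
      unif01_real_labelWindow hδ.le (hσ he)
        ((mul_le_mul_of_nonneg_right hj hδ.le).trans hJδ)]
  have hcopies := one_sub_measureReal_iUnion_copies_le (V := V) (B := B) hV
    (fun j e _ => measurableSet_firstLabelIn measurableSet_labelWindow)
    (have := Finset.card_pos.2 hH; by positivity) hB
    (fun j k hjk e he f hf => disjoint_firstLabelIn
      (disjoint_labelWindow hδ.le (hσ he) (hσ hf) (Fin.val_ne_of_ne hjk)))
  have hsub : (⋃ x : (VH ↪ V) × Fin J, patternEvent H.edgeFinset (Sym2.map x.1) (B x.2)) ⊆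
      {ω | Contains H P (toTGraph ω) δ} :=
    iUnion_subset fun x ω hω => contains_of_mem_patternEvent hP.2.2 hσm hσP hδ.le x.1 hω
  rw [Fintype.card_fin] at hcopies
  exact (sub_le_sub_left (measureReal_mono (μ := contModel V ψ) hsub) 1).trans hcopies

lemma exists_nat_mul_le_one {δ : ℝ} (hδ0 : 0 < δ) (hδ1 : δ ≤ 1) :
    ∃ J : ℕ, J * δ ≤ 1 ∧ 1 ≤ 2 * (J * δ) := by
  refine ⟨⌊1 / δ⌋₊, (le_div_iff₀ hδ0).1 (Nat.floor_le (by positivity)), ?_⟩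
  have hone : (1 : ℝ) ≤ ⌊1 / δ⌋₊ := mod_cast Nat.floor_pos.2 ((one_le_div hδ0).2 hδ1)
  have hfloor := (div_lt_iff₀ hδ0).1 (Nat.lt_floor_add_one (1 / δ))
  nlinarith

/-- With a maximal number of windows of length `δ`, a shared edge set `S` contributes through the
quantity `δ ^ (|S| - 1) * |V| ^ |V(S)|`: one factor `δ` is lost to the choice of the window. -/
theorem one_sub_measureReal_contains_le (hP : StrictPartialOrderOn H.edgeSet P)
    (hH : H.edgeFinset.Nonempty) {ψ : Measure ℕ} [IsProbabilityMeasure ψ] (hψ : 0 < lmdPos ψ)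
    {δ : ℝ} (hδ0 : 0 < δ) (hδ1 : δ ≤ 1) (hV : 2 * Fintype.card VH ≤ Fintype.card V) :
    1 - (contModel V ψ).real {ω | Contains H P (toTGraph ω) δ} ≤
      ∑ S ∈ H.edgeFinset.powerset with S.Nonempty,
        2 ^ (Fintype.card VH + 1) * (Fintype.card VH : ℝ) ^ (coveredVerts S).card *
          (H.edgeFinset.card / lmdPos ψ) ^ S.card /
            (δ ^ (S.card - 1) * Fintype.card V ^ (coveredVerts S).card) := by
  obtain ⟨J, hJδ, hJ⟩ := exists_nat_mul_le_one hδ0 hδ1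
  have hJpos : 0 < J := Nat.pos_of_ne_zero fun h => by norm_num [h] at hJ
  refine (one_sub_measureReal_contains_le_of_mul_le_one hP hH hψ hδ0 hJpos hJδ hV).trans
    (Finset.sum_le_sum fun S hS => ?_)
  have hcard : S.card - 1 + 1 = S.card := Nat.sub_add_cancel (Finset.mem_filter.1 hS).2.card_pos
  have hmpos : 0 < H.edgeFinset.card := hH.card_pos
  generalize H.edgeFinset.card = m at hmpos ⊢
  have hpow : δ ^ (S.card - 1) * (lmdPos ψ / m) ^ S.card / 2 ≤
      J * (lmdPos ψ * (δ / m)) ^ S.card := by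
    calc δ ^ (S.card - 1) * (lmdPos ψ / m) ^ S.card / 2
        ≤ J * δ * (δ ^ (S.card - 1) * (lmdPos ψ / m) ^ S.card) := by
          rw [div_eq_inv_mul]
          gcongr
          linarith
      _ = J * δ ^ (S.card - 1 + 1) * (lmdPos ψ / m) ^ S.card := by ring
      _ = J * (lmdPos ψ * (δ / m)) ^ S.card := by rw [hcard]; ring
  calc _ ≤ 2 ^ Fintype.card VH * (Fintype.card VH : ℝ) ^ (coveredVerts S).card /
        (δ ^ (S.card - 1) * (lmdPos ψ / m) ^ S.card / 2 *
          Fintype.card V ^ (coveredVerts S).card) := by gcongr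
    _ = _ := by
      rw [div_pow, div_pow]
      field_simp
      ring

end Motif

section Sparsity

lemma tendsto_min_one_pow_mul_atTop {α : Type*} {l : Filter α} {a b : α → ℝ} {k : ℕ}
    (hab : Tendsto (fun x => a x ^ k * b x) l atTop) (hb : Tendsto b l atTop) :
    Tendsto (fun x => min (a x) 1 ^ k * b x) l atTop := by
  refine tendsto_atTop.2 fun M => ?_
  filter_upwards [tendsto_atTop.1 hab M, tendsto_atTop.1 hb M] with x hxab hxb
  rcases le_total (a x) 1 with h | h <;> simpa [h]

lemma eventually_pos_of_tendsto_mul_rpow {δ : ℕ → ℝ} {ρ : ℝ}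
    (hthr : Tendsto (fun n : ℕ => δ n * (n : ℝ) ^ ρ) atTop atTop) : ∀ᶠ n in atTop, 0 < δ n := by
  filter_upwards [hthr.eventually_gt_atTop 0] with n hn
  exact pos_of_mul_pos_left hn (Real.rpow_nonneg n.cast_nonneg ρ)

variable {VH : Type*} [DecidableEq VH] {H : SimpleGraph VH} {S : Finset (Sym2 VH)}

lemma sparsity_le_card_div (hS : (S : Set (Sym2 VH)) ⊆ H.edgeSet) (hcard : 2 ≤ S.card) :
    sparsity H ≤ (coveredVerts S).card / ((S.card : ℝ) - 1) := by
  let I : H.Subgraph :=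
    { verts := (coveredVerts S : Set VH)
      Adj := fun a b => s(a, b) ∈ S
      adj_sub := fun h => SimpleGraph.mem_edgeSet H |>.1 (hS h)
      edge_vert := fun h => mem_coveredVerts.2 ⟨_, h, Sym2.mem_mk_left _ _⟩
      symm := ⟨fun a b h => Sym2.eq_swap (a := a) (b := b) ▸ h⟩ }
  have hI : I.edgeSet = (S : Set (Sym2 VH)) := by
    ext e
    induction e with
    | _ a b => rfl
  refine csInf_le ⟨0, ?_⟩ ⟨I, ?_, ?_⟩
  · rintro x ⟨I', hI', rfl⟩
    have : (2 : ℝ) ≤ I'.edgeSet.ncard := mod_cast hI'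
    exact div_nonneg (Nat.cast_nonneg _) (by linarith)
  · rwa [hI, ncard_coe_finset]
  · rw [hI, ncard_coe_finset, ncard_coe_finset]

lemma coveredVerts_nonempty (hS : S.Nonempty) : (coveredVerts S).Nonempty := by
  obtain ⟨e, he⟩ := hS
  exact ⟨e.out.1, mem_coveredVerts.2 ⟨e, he, e.out_fst_mem⟩⟩

lemma tendsto_natCast_pow_card_coveredVerts_atTop (hS : S.Nonempty) :
    Tendsto (fun n : ℕ => (n : ℝ) ^ (coveredVerts S).card) atTop atTop :=
  (tendsto_pow_atTop (coveredVerts_nonempty hS).card_pos.ne').comp tendsto_natCast_atTop_atTop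

lemma tendsto_pow_mul_natCast_pow_card_coveredVerts_atTop {δ : ℕ → ℝ}
    (hthr : Tendsto (fun n : ℕ => δ n * (n : ℝ) ^ sparsity H) atTop atTop) (hS : S.Nonempty)
    (hSH : (S : Set (Sym2 VH)) ⊆ H.edgeSet) :
    Tendsto (fun n : ℕ => δ n ^ (S.card - 1) * (n : ℝ) ^ (coveredVerts S).card) atTop atTop := by
  rcases (Nat.one_le_iff_ne_zero.2 hS.card_ne_zero).eq_or_lt with hone | htwo
  · simpa [← hone] using tendsto_natCast_pow_card_coveredVerts_atTop hS
  have hexp : sparsity H * (S.card - 1 : ℕ) ≤ (coveredVerts S).card := by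
    have hpos : (0 : ℝ) < S.card - 1 := sub_pos.2 (mod_cast htwo)
    rw [Nat.cast_pred hS.card_pos]
    exact (le_div_iff₀ hpos).1 (sparsity_le_card_div hSH htwo)
  refine tendsto_atTop_mono' atTop ?_
    ((tendsto_pow_atTop (Nat.sub_ne_zero_of_lt htwo)).comp hthr)
  filter_upwards [eventually_pos_of_tendsto_mul_rpow hthr, eventually_ge_atTop 1] with n hδ hn
  rw [Function.comp_apply, mul_pow, ← Real.rpow_mul_natCast n.cast_nonneg,
    ← Real.rpow_natCast (n : ℝ)]
  gcongr
  exact mod_cast hn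

lemma tendsto_sum_div_min_one_pow_mul [Fintype VH] [DecidableRel H.Adj] {δ : ℕ → ℝ}
    (hthr : Tendsto (fun n : ℕ => δ n * (n : ℝ) ^ sparsity H) atTop atTop)
    (C : Finset (Sym2 VH) → ℝ) :
    Tendsto (fun n : ℕ => ∑ S ∈ H.edgeFinset.powerset with S.Nonempty,
      C S / (min (δ n) 1 ^ (S.card - 1) * (n : ℝ) ^ (coveredVerts S).card)) atTop (𝓝 0) := by
  rw [← Finset.sum_const_zero (s := H.edgeFinset.powerset.filter (·.Nonempty))]
  refine tendsto_finsetSum _ fun S hS => ?_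
  obtain ⟨hSH, hSne⟩ := Finset.mem_filter.1 hS
  rw [Finset.mem_powerset, ← Finset.coe_subset, SimpleGraph.coe_edgeFinset] at hSH
  exact (tendsto_min_one_pow_mul_atTop
    (tendsto_pow_mul_natCast_pow_card_coveredVerts_atTop hthr hSne hSH)
    (tendsto_natCast_pow_card_coveredVerts_atTop hSne)).const_div_atTop (C S)

end Sparsity

theorem statement0_general {VH : Type*} [Finite VH] (H : SimpleGraph VH)
    (hH : 2 ≤ H.edgeSet.ncard) (P : Sym2 VH → Sym2 VH → Prop)
    (hP : StrictPartialOrderOn H.edgeSet P) (ψ : Measure ℕ) [IsProbabilityMeasure ψ]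
    (hψ : 0 < lmdPos ψ) (δ : ℕ → ℝ)
    (hthr : Tendsto (fun n : ℕ => δ n * (n : ℝ) ^ sparsity H) atTop atTop) :
    Tendsto (fun n : ℕ => contModel (Fin n) ψ {ω | Contains H P (toTGraph ω) (δ n)})
      atTop (𝓝 1) := by
  classical
  have := Fintype.ofFinite VH
  have hedges : H.edgeFinset.Nonempty := by
    rw [← Finset.coe_nonempty, SimpleGraph.coe_edgeFinset]
    exact nonempty_of_ncard_ne_zero (by lia)
  have herr := tendsto_sum_div_min_one_pow_mul hthr fun S =>
    2 ^ (Fintype.card VH + 1) * (Fintype.card VH : ℝ) ^ (coveredVerts S).card *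
      (H.edgeFinset.card / lmdPos ψ) ^ S.card
  refine (ENNReal.tendsto_toReal_iff (fun n => measure_ne_top _ _) ENNReal.one_ne_top).1 ?_
  refine tendsto_of_tendsto_of_tendsto_of_le_of_le' (by simpa using herr.const_sub 1)
    tendsto_const_nhds ?_ (Eventually.of_forall fun n => measureReal_le_one)
  filter_upwards [eventually_pos_of_tendsto_mul_rpow hthr,
    eventually_gt_atTop (2 * Fintype.card VH)] with n hδ hn
  have : Nonempty (Fin n) := ⟨⟨0, by lia⟩⟩
  have hbound := one_sub_measureReal_contains_le (V := Fin n) hP hedges hψ (lt_min hδ one_pos)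
    (min_le_right (δ n) 1) (by rw [Fintype.card_fin]; exact hn.le)
  rw [Fintype.card_fin] at hbound
  exact sub_le_comm.1 <| (sub_le_sub_left (measureReal_mono fun ω =>
    contains_mono (min_le_left (δ n) 1)) 1).trans hbound

/-- If `δ(n)·n^{ρ_H} → ∞`, then a sample of `Γ_{[n]}(ψ)` contains
`(H, P)` as a `δ(n)`-temporal motif with high probability. -/
theorem statement0 {VH : Type} [Fintype VH] [DecidableEq VH] (H : SimpleGraph VH)
    (hH : 2 ≤ H.edgeSet.ncard)
    (P : Sym2 VH → Sym2 VH → Prop) (hP : StrictPartialOrderOn H.edgeSet P)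
    (ψ : Measure ℕ) (hψ : IsLMD ψ)
    (δ : ℕ → ℝ) (hδ : ∀ n, δ n ∈ Set.Ioo (0 : ℝ) 1)
    (hthr : Tendsto (fun n : ℕ => δ n * (n : ℝ) ^ sparsity H) atTop atTop) :
    Tendsto (fun n : ℕ =>
        contModel (Fin n) ψ {ω | Contains H P (toTGraph ω) (δ n)})
      atTop (𝓝 1) := by
  have := hψ.1
  exact statement0_general H hH P hP ψ (lmdPos_pos hψ) δ hthr

end RTG
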